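/- Let 1 ≤ r ≤ 8 and let β ∈ ℤ^{1+r} satisfy: p_a(β) = 2, β·l ≥ 1 for every line class l, β·C ≥ 1 for every conic class C, and β ≠ −2K in case r = 8. Then: (i) the only pair (β_1, β_2) of classes with β_1 + β_2 = β, β_2 a conic class, and p_a(β_1) = 1 is (β_1, β_2) = (−K, β+K), and it satisfies β_1·β_2 = 2 and (−K)·β_2 = 2; (ii) the number of line classes l such that p_a(β − l) = 1 is exactly 2r − 2 (= 2·e(S_r) − 8, where e(S_r) = r + 3), and every such l satisfies (β − l)·l = 2. -/

import Mathlib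

/-!
Put `D = β + K`. The hypotheses say `D·l ≥ 0` on every line class, and `p_a(β) = 2` reads
`D² - K·D = 2`. The reflections in the roots `h - e_i - e_j - e_k` preserve the pairing and `K`,
hence permute the line classes, and they lower the degree of any `D` with
`d < a_i + a_j + a_k`; since `d ≥ 0` for `D` nonnegative on lines, descent on `d` brings `D` to
reduced form: `a_i ≥ 0` and `d` bounds the sum of any three of the `a_i` (`main_descent`).
For `r = 1` there are too few lines, and the conic class `h - e_1` is used instead (`main_one`).

For a reduced class let `M ≥ b ≥ c` be its three largest coefficients. As `r ≤ 8`, the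
remaining ones contribute at most `5c` to `∑ a_i` and `5c²` to `∑ a_i²`, so `D² ≥ 0` and
`-K·D ≥ c`. Together with `D² - K·D = 2` this leaves only
`D = h - e_i`, or `D = -K` with `r = 8`, the latter being excluded (`reduced_classify`).
So `D` is always a conic class, in the orbit of some `h - e_i`.

For a line class `l`, `p_a(β - l) = 2 - β·l`, so `p_a(β - l) = 1` iff `D·l = 0`. For
`D = h - e_i` the line classes orthogonal to `D` are `e_j` and `h - e_i - e_j` with `j ≠ i`, which
gives `2(r - 1)` of them (`lines_of_fiber`).

For a decomposition `β = β₁ + C` as in part (i), `p_a(β₁) = 1` amounts to `D·C = 0`; then `D - C`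
is isotropic and orthogonal to `K`, and it vanishes because the pairing is negative definite on the
orthogonal complement of `K` for `r ≤ 8` (`eq_zero_of_isotropic`).
-/


/-- Intersection pairing on the Picard lattice of `S_r`, with classes written in
`(d; a_1, …, a_r)` coordinates (the class `d·h − ∑ a_i·e_i`):
`(d; a)·(d'; a') = d·d' − ∑ a_i·a_i'`. -/
def inter {r : ℕ} (x y : ℤ × (Fin r → ℤ)) : ℤ :=
  x.1 * y.1 - ∑ i, x.2 i * y.2 i

/-- The canonical class `K = (−3; −1, …, −1)` of `S_r`. -/
def Kcl (r : ℕ) : ℤ × (Fin r → ℤ) := (-3, fun _ => -1)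

/-- A line class: `l·l = −1` and `(−K)·l = 1`. -/
def IsLine {r : ℕ} (l : ℤ × (Fin r → ℤ)) : Prop :=
  inter l l = -1 ∧ inter (-(Kcl r)) l = 1

/-- A conic class: `C·C = 0` and `(−K)·C = 2`. -/
def IsConic {r : ℕ} (C : ℤ × (Fin r → ℤ)) : Prop :=
  inter C C = 0 ∧ inter (-(Kcl r)) C = 2

/-- Arithmetic genus `p_a(β) = β·(β+K)/2 + 1`. -/
def pa {r : ℕ} (β : ℤ × (Fin r → ℤ)) : ℤ :=
  inter β (β + Kcl r) / 2 + 1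

/-! ### The pairing -/

section Pairing

variable {r : ℕ}

lemma inter_comm' (x y : ℤ × (Fin r → ℤ)) : inter x y = inter y x := by
  simp only [inter, mul_comm]

lemma inter_add_left (x y z : ℤ × (Fin r → ℤ)) : inter (x + y) z = inter x z + inter y z := by
  simp only [inter, Prod.fst_add, Prod.snd_add, Pi.add_apply, add_mul, Finset.sum_add_distrib]
  ring

lemma inter_neg_left (x z : ℤ × (Fin r → ℤ)) : inter (-x) z = -inter x z := by
  simp only [inter, Prod.fst_neg, Prod.snd_neg, Pi.neg_apply, neg_mul, Finset.sum_neg_distrib]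
  ring

lemma inter_smul_left (c : ℤ) (x z : ℤ × (Fin r → ℤ)) : inter (c • x) z = c * inter x z := by
  simp only [inter, Prod.smul_fst, Prod.smul_snd, Pi.smul_apply, smul_eq_mul, mul_assoc,
    ← Finset.mul_sum]
  ring

lemma inter_add_right (x y z : ℤ × (Fin r → ℤ)) : inter x (y + z) = inter x y + inter x z := by
  rw [inter_comm', inter_add_left, inter_comm' y, inter_comm' z]

lemma inter_neg_right (x z : ℤ × (Fin r → ℤ)) : inter x (-z) = -inter x z := by
  rw [inter_comm', inter_neg_left, inter_comm' z]

lemma inter_smul_right (c : ℤ) (x z : ℤ × (Fin r → ℤ)) : inter x (c • z) = c * inter x z := by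
  rw [inter_comm', inter_smul_left, inter_comm' z]

lemma inter_K (x : ℤ × (Fin r → ℤ)) : inter (Kcl r) x = -3 * x.1 + ∑ i, x.2 i := by
  simp [inter, Kcl]

lemma inter_self (x : ℤ × (Fin r → ℤ)) : inter x x = x.1 ^ 2 - ∑ i, x.2 i ^ 2 := by
  simp [inter, sq]

/-- `x² + x·K` is even, so the integer division in `pa` is exact. -/
lemma two_dvd_inter (x : ℤ × (Fin r → ℤ)) : 2 ∣ inter x (x + Kcl r) := by
  rw [inter_add_right, inter_comm' x (Kcl r), inter_K, inter_self]
  have h : x.1 ^ 2 - ∑ i, x.2 i ^ 2 + (-3 * x.1 + ∑ i, x.2 i)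
      = x.1 * (x.1 - 1) - 2 * x.1 - ∑ i, x.2 i * (x.2 i - 1) := by
    simp only [mul_sub, Finset.sum_sub_distrib, sq, mul_one]
    ring
  have ev (n : ℤ) : 2 ∣ n * (n - 1) := (Int.even_mul_pred_self n).two_dvd
  rw [h]
  exact dvd_sub (dvd_sub (ev _) ⟨_, rfl⟩) (Finset.dvd_sum fun i _ => ev _)

lemma pa_eq_iff (x : ℤ × (Fin r → ℤ)) (g : ℤ) :
    pa x = g ↔ inter x x + inter (Kcl r) x = 2 * g - 2 := by
  have h := two_dvd_inter x
  have e : inter x (x + Kcl r) = inter x x + inter (Kcl r) x := by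
    rw [inter_add_right, inter_comm' x (Kcl r)]
  unfold pa
  omega

/-- Hodge index: the pairing is negative definite on the orthogonal complement of `K`. -/
lemma eq_zero_of_isotropic (hr : r ≤ 8) (x : ℤ × (Fin r → ℤ)) (h0 : inter x x = 0)
    (hK : inter (Kcl r) x = 0) : x = 0 := by
  rw [inter_self] at h0
  rw [inter_K] at hK
  have cs := sq_sum_le_card_mul_sum_sq (s := Finset.univ) (f := x.2)
  simp only [Finset.card_univ, Fintype.card_fin] at cs
  have hr' : (r : ℤ) ≤ 8 := by exact_mod_cast hr
  have e1 : ∑ i, x.2 i = 3 * x.1 := by linarith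
  have e2 : ∑ i, x.2 i ^ 2 = x.1 ^ 2 := by linarith
  rw [e1, e2] at cs
  have hd : x.1 = 0 := by
    have : x.1 ^ 2 ≤ 0 := by nlinarith [sq_nonneg x.1]
    exact pow_eq_zero_iff (two_ne_zero) |>.1 (le_antisymm this (sq_nonneg _))
  rw [hd] at e2
  have := (Finset.sum_eq_zero_iff_of_nonneg (fun i _ => sq_nonneg (x.2 i))).1 (by simpa using e2)
  refine Prod.ext hd (funext fun i => ?_)
  simpa using this i (Finset.mem_univ i)

/-! ### Reflections -/

/-- The class `h - ∑_{i ∈ t} e_i`; a root when `#t = 3`, a line class when `#t = 2`. -/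
def rootCl (t : Finset (Fin r)) : ℤ × (Fin r → ℤ) := (1, fun i => if i ∈ t then 1 else 0)

lemma inter_rootCl (x : ℤ × (Fin r → ℤ)) (t : Finset (Fin r)) :
    inter x (rootCl t) = x.1 - ∑ i ∈ t, x.2 i := by
  simp [inter, rootCl]

lemma inter_rootCl_self (t : Finset (Fin r)) : inter (rootCl t) (rootCl t) = 1 - t.card := by
  rw [inter_rootCl]
  simp [rootCl, Finset.sum_ite_mem]

lemma inter_K_rootCl (t : Finset (Fin r)) : inter (Kcl r) (rootCl t) = -3 + t.card := by
  rw [inter_rootCl]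
  simp [Kcl]

/-- The reflection `x ↦ x + (x·v) v` in `v = h - ∑_{i ∈ t} e_i`, for `#t = 3` (so `v² = -2`). -/
def refl3 (t : Finset (Fin r)) (x : ℤ × (Fin r → ℤ)) : ℤ × (Fin r → ℤ) :=
  x + inter x (rootCl t) • rootCl t

lemma inter_refl3 {t : Finset (Fin r)} (ht : t.card = 3) (x y : ℤ × (Fin r → ℤ)) :
    inter (refl3 t x) (refl3 t y) = inter x y := by
  simp only [refl3, inter_add_left, inter_add_right, inter_smul_left, inter_smul_right,
    inter_rootCl_self, ht, inter_comm' (rootCl t) y]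
  push_cast
  ring

lemma refl3_refl3 {t : Finset (Fin r)} (ht : t.card = 3) (x : ℤ × (Fin r → ℤ)) :
    refl3 t (refl3 t x) = x := by
  have h : inter (refl3 t x) (rootCl t) = -inter x (rootCl t) := by
    simp only [refl3, inter_add_left, inter_smul_left, inter_rootCl_self, ht]
    push_cast
    ring
  rw [refl3, h, refl3]
  module

lemma inter_refl3_left {t : Finset (Fin r)} (ht : t.card = 3) (x y : ℤ × (Fin r → ℤ)) :
    inter (refl3 t x) y = inter x (refl3 t y) := by
  rw [← inter_refl3 ht x, refl3_refl3 ht]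

lemma refl3_K {t : Finset (Fin r)} (ht : t.card = 3) : refl3 t (-(Kcl r)) = -(Kcl r) := by
  simp [refl3, inter_neg_left, inter_K_rootCl, ht]

lemma inter_K_refl3 {t : Finset (Fin r)} (ht : t.card = 3) (x : ℤ × (Fin r → ℤ)) :
    inter (-(Kcl r)) (refl3 t x) = inter (-(Kcl r)) x := by
  rw [← inter_refl3_left ht, refl3_K ht]

lemma isLine_refl3 {t : Finset (Fin r)} (ht : t.card = 3) (x : ℤ × (Fin r → ℤ)) :
    IsLine (refl3 t x) ↔ IsLine x := by
  simp only [IsLine, inter_refl3 ht, inter_K_refl3 ht]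

lemma isConic_refl3 {t : Finset (Fin r)} (ht : t.card = 3) (x : ℤ × (Fin r → ℤ)) :
    IsConic (refl3 t x) ↔ IsConic x := by
  simp only [IsConic, inter_refl3 ht, inter_K_refl3 ht]

/-! ### Some line and conic classes -/

/-- The exceptional class `e_j` (the coordinates of `d·h - ∑ a_i e_i` carry a sign). -/
def excCl (j : Fin r) : ℤ × (Fin r → ℤ) := (0, Pi.single j (-1))

lemma inter_excCl (x : ℤ × (Fin r → ℤ)) (j : Fin r) : inter x (excCl j) = x.2 j := by
  simp [inter, excCl, Pi.single_apply]

lemma isLine_excCl (j : Fin r) : IsLine (excCl j) := by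
  constructor
  · rw [inter_excCl]; simp [excCl]
  · rw [inter_excCl]; simp [Kcl]

lemma isLine_rootCl {t : Finset (Fin r)} (ht : t.card = 2) : IsLine (rootCl t) := by
  constructor
  · rw [inter_rootCl_self, ht]; norm_num
  · rw [inter_neg_left, inter_K_rootCl, ht]; norm_num

lemma isConic_rootCl (i : Fin r) : IsConic (rootCl {i}) := by
  constructor
  · rw [inter_rootCl_self]; simp
  · rw [inter_neg_left, inter_K_rootCl]; simp

/-! ### Line classes orthogonal to `h - e_i` -/

/-- The line classes in the reducible fibres of the conic class `h - e_i`. -/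
def fiberLine (i : Fin r) (p : Fin r × Bool) : ℤ × (Fin r → ℤ) :=
  if p.2 then rootCl {i, p.1} else excCl p.1

lemma fiberLine_injOn (i : Fin r) :
    Set.InjOn (fiberLine i) ↑((Finset.univ.erase i) ×ˢ (Finset.univ : Finset Bool)) := by
  rintro ⟨j, b⟩ hj ⟨k, c⟩ hk h
  simp only [Finset.coe_product, Set.mem_prod, Finset.mem_coe, Finset.mem_erase] at hj hk
  have hji := hj.1.1
  have hki := hk.1.1
  have h1 := congrArg Prod.fst h
  have h2 := congrFun (congrArg Prod.snd h) j
  cases b <;> cases c <;> simp [fiberLine, rootCl, excCl, Pi.single_apply, hji] at h1 h2 ⊢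
  · exact h2
  · exact h2

lemma lines_of_fiber (i : Fin r) :
    {l : ℤ × (Fin r → ℤ) | IsLine l ∧ inter (rootCl {i}) l = 0} =
      ↑(((Finset.univ.erase i) ×ˢ (Finset.univ : Finset Bool)).image (fiberLine i)) := by
  ext l
  simp only [Set.mem_ofPred_eq, Finset.coe_image, Set.mem_image, Finset.coe_product, Set.mem_prod,
    Finset.mem_coe, Finset.mem_erase, Finset.mem_univ, and_true, Prod.exists]
  constructor
  · rintro ⟨⟨h1, h2⟩, h3⟩
    rw [inter_self] at h1
    rw [inter_neg_left, inter_K] at h2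
    rw [inter_comm', inter_rootCl, Finset.sum_singleton] at h3
    rw [← Finset.add_sum_erase _ _ (Finset.mem_univ i)] at h1 h2
    have hd : l.1 = l.2 i := by linarith
    rw [hd] at h1 h2
    obtain ⟨j, hj, hj0⟩ : ∃ j ∈ Finset.univ.erase i, l.2 j ≠ 0 := by
      by_contra! hn
      rw [Finset.sum_eq_zero fun k hk => by rw [hn k hk]; rfl] at h1
      linarith
    rw [← Finset.add_sum_erase _ _ hj] at h1 h2
    -- the squares of the coefficients away from `i` sum to `1`, and one of them is nonzero
    have hsq : 1 ≤ l.2 j ^ 2 := by have := sq_pos_of_ne_zero hj0; omega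
    have hz0 : ∑ k ∈ (Finset.univ.erase i).erase j, l.2 k ^ 2 = 0 :=
      le_antisymm (by linarith) (Finset.sum_nonneg fun _ _ => sq_nonneg _)
    have hz : ∀ k, k ≠ i → k ≠ j → l.2 k = 0 := by
      intro k hki hkj
      have := (Finset.sum_eq_zero_iff_of_nonneg (fun k _ => sq_nonneg (l.2 k))).1 hz0 k
        (by simp [hki, hkj])
      simpa using this
    rw [hz0] at h1
    rw [Finset.sum_eq_zero (s := (Finset.univ.erase i).erase j) (f := l.2)
      fun k hk => hz k (by simp_all) (by simp_all)] at h2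
    have hji : j ≠ i := (Finset.mem_erase.1 hj).1
    rcases mul_self_eq_one_iff.1 (show l.2 j * l.2 j = 1 by linarith [sq (l.2 j)]) with h | h
    · refine ⟨j, true, hji, ?_⟩
      have hi : l.2 i = 1 := by linarith
      refine Prod.ext (by simp [fiberLine, rootCl, hd, hi]) (funext fun k => ?_)
      by_cases hki : k = i
      · subst hki; simp [fiberLine, rootCl, hi]
      · by_cases hkj : k = j
        · subst hkj; simp [fiberLine, rootCl, h]
        · simp [fiberLine, rootCl, hki, hkj, hz k hki hkj]
    · refine ⟨j, false, hji, ?_⟩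
      have hi : l.2 i = 0 := by linarith
      refine Prod.ext (by simp [fiberLine, excCl, hd, hi]) (funext fun k => ?_)
      by_cases hkj : k = j
      · subst hkj; simp [fiberLine, excCl, h]
      · by_cases hki : k = i
        · subst hki; simp [fiberLine, excCl, hi, hkj]
        · simp [fiberLine, excCl, hkj, hz k hki hkj]
  · rintro ⟨j, b, hj, rfl⟩
    have hc : ({i, j} : Finset (Fin r)).card = 2 := Finset.card_pair (Ne.symm hj)
    cases b
    · refine ⟨by simpa [fiberLine] using isLine_excCl j, ?_⟩
      simp [fiberLine, inter_excCl, rootCl, hj]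
    · refine ⟨by simpa [fiberLine] using isLine_rootCl hc, ?_⟩
      simp only [fiberLine, if_true, inter_rootCl, Finset.sum_pair (Ne.symm hj)]
      simp [rootCl, hj]

/-! ### Reduced classes -/

/-- Reduced form: nonnegative coefficients, any three (or fewer) of which sum to at most the
degree. -/
def Reduced (D : ℤ × (Fin r → ℤ)) : Prop :=
  (∀ i, 0 ≤ D.2 i) ∧ ∀ t : Finset (Fin r), t.card ≤ 3 → ∑ i ∈ t, D.2 i ≤ D.1

/-- Split off a largest value of a nonnegative `a` on `s`, with value `0` when `s` is empty. -/
lemma exists_top {ι : Type*} [DecidableEq ι] (s : Finset ι) (a : ι → ℤ) (ha : ∀ i, 0 ≤ a i) :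
    ∃ t ⊆ s, ∃ m : ℤ, t.card ≤ 1 ∧ ∑ i ∈ t, a i = m ∧ ∑ i ∈ t, a i ^ 2 = m ^ 2 ∧ 0 ≤ m ∧
      (∀ x ∈ s, a x ≤ m) ∧ (s \ t).card = s.card - 1 ∧ (m = 0 ∨ ∃ x ∈ s, a x = m) := by
  rcases s.eq_empty_or_nonempty with rfl | hs
  · exact ⟨∅, by simp, 0, by simp⟩
  · obtain ⟨x, hx, hm⟩ := s.exists_max_image a hs
    refine ⟨{x}, by simpa using hx, a x, by simp, by simp, by simp, ha x, hm, ?_, .inr ⟨x, hx, rfl⟩⟩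
    rw [Finset.card_sdiff_of_subset (by simpa using hx), Finset.card_singleton]

/-- The three largest coefficients `M ≥ b ≥ c` of a reduced class control everything. -/
lemma exists_three (hr : r ≤ 8) {D : ℤ × (Fin r → ℤ)} (hD : Reduced D) :
    ∃ M b c : ℤ, 0 ≤ c ∧ c ≤ b ∧ b ≤ M ∧ M + b + c ≤ D.1 ∧ (∀ i, D.2 i ≤ M) ∧
      ∑ i, D.2 i ≤ M + b + 6 * c ∧ ∑ i, D.2 i ^ 2 ≤ M ^ 2 + b ^ 2 + 6 * c ^ 2 := by
  obtain ⟨h0, h3⟩ := hD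
  obtain ⟨t₁, s₁, M, c₁, e₁, q₁, -, l₁, k₁, -⟩ := exists_top Finset.univ D.2 h0
  obtain ⟨t₂, s₂, b, c₂, e₂, q₂, n₂, l₂, k₂, m₂⟩ := exists_top (Finset.univ \ t₁) D.2 h0
  obtain ⟨t₃, s₃, c, c₃, e₃, q₃, n₃, l₃, k₃, m₃⟩ := exists_top ((Finset.univ \ t₁) \ t₂) D.2 h0
  have S (f : Fin r → ℤ) : ∑ i, f i = ∑ i ∈ t₁, f i + (∑ i ∈ t₂, f i + (∑ i ∈ t₃, f i +
      ∑ i ∈ ((Finset.univ \ t₁) \ t₂) \ t₃, f i)) := by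
    rw [← Finset.sum_sdiff s₁, ← Finset.sum_sdiff s₂, ← Finset.sum_sdiff s₃]
    ring
  have hcb : c ≤ b := by
    rcases m₃ with rfl | ⟨x, hx, rfl⟩
    · exact n₂
    · exact l₂ x (Finset.sdiff_subset hx)
  have hM : 0 ≤ M := by
    have := Finset.sum_nonneg (s := t₁) fun i _ => h0 i
    omega
  have hbM : b ≤ M := by
    rcases m₂ with rfl | ⟨x, hx, rfl⟩
    · exact hM
    · exact l₁ x (Finset.mem_univ x)
  have hcard : (((Finset.univ \ t₁) \ t₂) \ t₃).card ≤ 5 := by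
    rw [k₃, k₂, k₁, Finset.card_univ, Fintype.card_fin]; omega
  have hcard' : ((((Finset.univ \ t₁) \ t₂) \ t₃).card : ℤ) ≤ 5 := by exact_mod_cast hcard
  have r1 : ∑ i ∈ ((Finset.univ \ t₁) \ t₂) \ t₃, D.2 i ≤ 5 * c := by
    refine (Finset.sum_le_card_nsmul _ _ c fun x hx => l₃ x (Finset.sdiff_subset hx)).trans ?_
    rw [nsmul_eq_mul]
    exact mul_le_mul_of_nonneg_right hcard' n₃
  have r2 : ∑ i ∈ ((Finset.univ \ t₁) \ t₂) \ t₃, D.2 i ^ 2 ≤ 5 * c ^ 2 := by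
    refine (Finset.sum_le_card_nsmul _ _ (c ^ 2) fun x hx =>
      pow_le_pow_left₀ (h0 x) (l₃ x (Finset.sdiff_subset hx)) 2).trans ?_
    rw [nsmul_eq_mul]
    exact mul_le_mul_of_nonneg_right hcard' (sq_nonneg c)
  refine ⟨M, b, c, n₃, hcb, hbM, ?_, fun i => l₁ i (Finset.mem_univ i), ?_, ?_⟩
  · have d₁₂ : Disjoint t₁ t₂ := Finset.disjoint_of_subset_right s₂ Finset.disjoint_sdiff
    have d₂₃ : Disjoint t₂ t₃ := Finset.disjoint_of_subset_right s₃ Finset.disjoint_sdiff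
    have d₁₃ : Disjoint t₁ t₃ := Finset.disjoint_of_subset_right (s₃.trans Finset.sdiff_subset)
      Finset.disjoint_sdiff
    have := h3 (t₁ ∪ t₂ ∪ t₃) (((Finset.card_union_le _ _).trans
      (Nat.add_le_add_right (Finset.card_union_le _ _) _)).trans (by omega))
    rw [Finset.sum_union (Finset.disjoint_union_left.2 ⟨d₁₃, d₂₃⟩), Finset.sum_union d₁₂] at this
    linarith
  · rw [S, e₁, e₂, e₃]; linarith
  · rw [S, q₁, q₂, q₃]; linarith

/-- A reduced class with `D² - K·D = 2` is some `h - e_i`, unless it is `-K` with `r = 8`. -/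
lemma reduced_classify (hr : r ≤ 8) {D : ℤ × (Fin r → ℤ)} (hD : Reduced D)
    (h2 : inter D D + inter (-(Kcl r)) D = 2) (h8 : r = 8 → D ≠ -(Kcl r)) :
    ∃ i, D = rootCl {i} := by
  obtain ⟨M, b, c, hc, hcb, hbM, hd, hle, hS1, hS2⟩ := exists_three hr hD
  rw [inter_self, inter_neg_left, inter_K] at h2
  have hsum : ∑ i, (1 - D.2 i) = r - ∑ i, D.2 i := by simp
  have hsq : ∑ i, D.2 i ^ 2 ≤ r * M ^ 2 := by
    refine (Finset.sum_le_card_nsmul _ _ (M ^ 2) fun x _ =>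
      pow_le_pow_left₀ (hD.1 x) (hle x) 2).trans ?_
    simp
  have hS1' : 0 ≤ ∑ i, D.2 i := Finset.sum_nonneg fun i _ => hD.1 i
  have hS2' : 0 ≤ ∑ i, D.2 i ^ 2 := Finset.sum_nonneg fun i _ => sq_nonneg _
  generalize hs1 : ∑ i, D.2 i = S1 at *
  generalize hs2 : ∑ i, D.2 i ^ 2 = S2 at *
  generalize hdd : D.1 = d at *
  have hpos : 0 ≤ d ^ 2 - S2 := by nlinarith
  -- now `-K·D ≤ 2`, which bounds all the unknowns
  have hc2 : c ≤ 2 := by linarith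
  have hb2 : b ≤ 2 := by linarith
  have hM4 : M ≤ 4 := by linarith
  have hd6 : d ≤ 6 := by linarith
  have key : (d = 1 ∧ S1 = 1) ∨ (d = 3 ∧ S1 = 8 ∧ S2 = 8 ∧ M = 1) := by
    have hd0 : 0 ≤ d := by linarith
    have hb0 : 0 ≤ b := by linarith
    have hM0 : 0 ≤ M := by linarith
    interval_cases c <;> interval_cases b <;> interval_cases M <;> first
      | omega
      | (interval_cases d <;> omega)
  rcases key with ⟨rfl, rfl⟩ | ⟨rfl, rfl, rfl, rfl⟩
  · obtain ⟨i, hi⟩ : ∃ i, D.2 i ≠ 0 := by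
      by_contra! hn
      simp [hn] at hs1
    have hi0 := hD.1 i
    rw [← Finset.add_sum_erase _ _ (Finset.mem_univ i)] at hs1
    have hnn : 0 ≤ ∑ k ∈ Finset.univ.erase i, D.2 k := Finset.sum_nonneg fun k _ => hD.1 k
    have hz := (Finset.sum_eq_zero_iff_of_nonneg (fun k _ => hD.1 k)).1
      (show ∑ k ∈ Finset.univ.erase i, D.2 k = 0 by omega)
    refine ⟨i, Prod.ext hdd (funext fun k => ?_)⟩
    by_cases hk : k = i
    · subst hk
      simp only [rootCl, Finset.mem_singleton, if_true]
      omega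
    · simpa [rootCl, hk] using hz k (by simp [hk])
  · exfalso
    have hr8 : r = 8 := by omega
    refine h8 hr8 (Prod.ext (by simp [Kcl, hdd]) (funext fun k => ?_))
    have hz := (Finset.sum_eq_zero_iff_of_nonneg
      (fun k _ => sub_nonneg.2 (hle k))).1 (hsum.trans (by rw [hr8]; norm_num)) k
        (Finset.mem_univ k)
    simp only [Kcl, Prod.snd_neg, Pi.neg_apply]
    omega

/-! ### Descent -/

/-- `D` is a conic class with exactly `2r - 2` line classes orthogonal to it. Both properties are
invariant under reflections. -/
def ConicWithLines (D : ℤ × (Fin r → ℤ)) : Prop :=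
  IsConic D ∧ {l : ℤ × (Fin r → ℤ) | IsLine l ∧ inter D l = 0}.Finite ∧
    {l : ℤ × (Fin r → ℤ) | IsLine l ∧ inter D l = 0}.ncard = 2 * r - 2

lemma conicWithLines_rootCl (i : Fin r) : ConicWithLines (rootCl {i}) := by
  refine ⟨isConic_rootCl i, ?_, ?_⟩
  · rw [lines_of_fiber]; exact Finset.finite_toSet _
  · rw [lines_of_fiber, Set.ncard_coe_finset, Finset.card_image_of_injOn (fiberLine_injOn i)]
    simp
    omega

lemma conicWithLines_of_refl3 {t : Finset (Fin r)} (ht : t.card = 3) {D : ℤ × (Fin r → ℤ)}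
    (h : ConicWithLines (refl3 t D)) : ConicWithLines D := by
  obtain ⟨hC, hf, hn⟩ := h
  have himg : {l : ℤ × (Fin r → ℤ) | IsLine l ∧ inter D l = 0} =
      refl3 t '' {l | IsLine l ∧ inter (refl3 t D) l = 0} := by
    ext l
    constructor
    · rintro ⟨h1, h2⟩
      exact ⟨refl3 t l, ⟨(isLine_refl3 ht l).2 h1, by rwa [inter_refl3 ht]⟩, refl3_refl3 ht l⟩
    · rintro ⟨m, ⟨h1, h2⟩, rfl⟩
      exact ⟨(isLine_refl3 ht m).2 h1, by rwa [← inter_refl3_left ht]⟩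
  refine ⟨(isConic_refl3 ht D).1 hC, ?_, ?_⟩
  · rw [himg]; exact hf.image _
  · rw [himg, Set.ncard_image_of_injective _ (Function.LeftInverse.injective (refl3_refl3 ht)), hn]

/-- Descent on the degree: a class that is not reduced becomes one of smaller degree under a
reflection. For `r ≥ 2` the line classes alone force degree at least `a_i + a_j`. -/
lemma main_descent (hr2 : 2 ≤ r) (hr : r ≤ 8) (n : ℕ) : ∀ D : ℤ × (Fin r → ℤ), D.1 ≤ n →
    (∀ l, IsLine l → 0 ≤ inter D l) → inter D D + inter (-(Kcl r)) D = 2 →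
    (r = 8 → D ≠ -(Kcl r)) → ConicWithLines D := by
  induction n using Nat.strong_induction_on with
  | _ n ih =>
    intro D hn hl h2 h8
    have h0 : ∀ i, 0 ≤ D.2 i := fun i => by simpa [inter_excCl] using hl _ (isLine_excCl i)
    have hpair : ∀ t : Finset (Fin r), t.card = 2 → ∑ i ∈ t, D.2 i ≤ D.1 := fun t ht => by
      simpa [inter_rootCl] using hl _ (isLine_rootCl ht)
    by_cases hred : ∀ t : Finset (Fin r), t.card = 3 → ∑ i ∈ t, D.2 i ≤ D.1
    · have hR : Reduced D := by
        refine ⟨h0, fun t ht => ?_⟩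
        rcases Nat.lt_or_ge t.card 3 with h | h
        · obtain ⟨u, hu, hu2⟩ := Finset.exists_superset_card_eq (s := t) (n := 2) (by omega)
            (by simpa using hr2)
          exact (Finset.sum_le_sum_of_subset_of_nonneg hu fun i _ _ => h0 i).trans (hpair u hu2)
        · exact hred t (by omega)
      obtain ⟨i, rfl⟩ := reduced_classify hr hR h2 h8
      exact conicWithLines_rootCl i
    · push Not at hred
      obtain ⟨t, ht, hlt⟩ := hred
      have hl' : ∀ l, IsLine l → 0 ≤ inter (refl3 t D) l := fun l h => by
        rw [inter_refl3_left ht]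
        exact hl _ ((isLine_refl3 ht l).2 h)
      have hfst : (refl3 t D).1 < D.1 := by
        have : (refl3 t D).1 = D.1 + (D.1 - ∑ i ∈ t, D.2 i) := by
          rw [← inter_rootCl]
          simp [refl3, rootCl]
        omega
      -- the degree stays nonnegative, since `h = (h - e_i - e_j) + e_i + e_j` is a sum of lines
      have hnn : 0 ≤ (refl3 t D).1 := by
        obtain ⟨u, -, hu⟩ := Finset.exists_superset_card_eq (s := (∅ : Finset (Fin r))) (n := 2)
          (by simp) (by simpa using hr2)
        have h1 := hl' _ (isLine_rootCl hu)
        rw [inter_rootCl] at h1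
        have h3 : 0 ≤ ∑ i ∈ u, (refl3 t D).2 i := Finset.sum_nonneg fun i _ => by
          simpa [inter_excCl] using hl' _ (isLine_excCl i)
        omega
      refine conicWithLines_of_refl3 ht (ih (refl3 t D).1.toNat (by omega) _ (by omega) hl' ?_ ?_)
      · rw [inter_refl3 ht, inter_K_refl3 ht, h2]
      · intro h e
        apply h8 h
        rw [← refl3_refl3 ht D, e, refl3_K ht]

/-- For `r = 1` the only line class is `e_1`, which does not bound the degree from below; the conic
class `h - e_1` gives `d ≥ a_1 - 1`, and `d = a_1 - 1` is incompatible with `D² - K·D = 2`. -/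
lemma main_one {D : ℤ × (Fin 1 → ℤ)} (hl : ∀ l, IsLine l → 0 ≤ inter D l)
    (hC : ∀ C, IsConic C → -1 ≤ inter D C) (h2 : inter D D + inter (-(Kcl 1)) D = 2) :
    ConicWithLines D := by
  have h0 : 0 ≤ D.2 0 := by simpa [inter_excCl] using hl _ (isLine_excCl 0)
  have h1 := hC _ (isConic_rootCl 0)
  rw [inter_rootCl] at h1
  simp only [Finset.sum_singleton] at h1
  have hle : D.2 0 ≤ D.1 := by
    by_contra! hlt
    have e : D.2 0 = D.1 + 1 := by omega
    rw [inter_self, inter_neg_left, inter_K] at h2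
    simp only [Fin.sum_univ_one, e] at h2
    ring_nf at h2
    omega
  have hR : Reduced D := by
    refine ⟨fun i => by rwa [Subsingleton.elim i 0], fun t _ => ?_⟩
    refine (Finset.sum_le_sum_of_subset_of_nonneg (Finset.subset_univ t) fun i _ _ => ?_).trans
      (by simpa using hle)
    rwa [Subsingleton.elim i 0]
  obtain ⟨i, rfl⟩ := reduced_classify (by norm_num) hR h2 (by norm_num)
  exact conicWithLines_rootCl i

end Pairing

/-! ### The wall-crossing data -/

/-- numerical wall-crossing data for a (numerically) very ample
class `β` of arithmetic genus `2` on `S_r`, `1 ≤ r ≤ 8`: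
(i) the unique decomposition `β = β₁ + β₂` with `β₂` a conic class and
`p_a(β₁) = 1` is `(−K, β + K)`, and it satisfies `β₁·β₂ = 2`, `(−K)·β₂ = 2`;
(ii) there are exactly `2r − 2 = 2e(S_r) − 8` line classes `l` with
`p_a(β − l) = 1`, and each satisfies `(β − l)·l = 2`. -/
theorem genus_two_wall_crossing (r : ℕ) (hr1 : 1 ≤ r) (hr : r ≤ 8)
    (β : ℤ × (Fin r → ℤ)) (hpa : pa β = 2)
    (hline : ∀ l : ℤ × (Fin r → ℤ), IsLine l → 1 ≤ inter β l)
    (hconic : ∀ C : ℤ × (Fin r → ℤ), IsConic C → 1 ≤ inter β C)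
    (h8 : r = 8 → β ≠ -(Kcl r + Kcl r)) :
    ((∀ β₁ β₂ : ℤ × (Fin r → ℤ), β₁ + β₂ = β → IsConic β₂ → pa β₁ = 1 →
        β₁ = -(Kcl r) ∧ β₂ = β + Kcl r) ∧
      IsConic (β + Kcl r) ∧ pa (-(Kcl r)) = 1 ∧
      inter (-(Kcl r)) (β + Kcl r) = 2) ∧
    ({l : ℤ × (Fin r → ℤ) | IsLine l ∧ pa (β - l) = 1}.Finite ∧
      {l : ℤ × (Fin r → ℤ) | IsLine l ∧ pa (β - l) = 1}.ncard = 2 * r - 2 ∧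
      ∀ l : ℤ × (Fin r → ℤ), IsLine l → pa (β - l) = 1 → inter (β - l) l = 2) := by
  have hD2 : inter (β + Kcl r) (β + Kcl r) + inter (-(Kcl r)) (β + Kcl r) = 2 := by
    rw [pa_eq_iff] at hpa
    simp only [inter_add_left, inter_add_right, inter_neg_left, inter_comm' β (Kcl r)]
    linarith
  have hDl : ∀ l, IsLine l → 0 ≤ inter (β + Kcl r) l := fun l h => by
    have h1 := hline l h
    have h2 := h.2
    rw [inter_neg_left] at h2
    rw [inter_add_left]
    linarith
  have hDC : ∀ C, IsConic C → -1 ≤ inter (β + Kcl r) C := fun C h => by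
    have h1 := hconic C h
    have h2 := h.2
    rw [inter_neg_left] at h2
    rw [inter_add_left]
    linarith
  have hmain : ConicWithLines (β + Kcl r) := by
    rcases Nat.lt_or_ge r 2 with h | h
    · obtain rfl : r = 1 := by omega
      exact main_one hDl hDC hD2
    · refine main_descent h hr (β + Kcl r).1.toNat _ (Int.self_le_toNat _) hDl hD2 fun h e => ?_
      apply h8 h
      rw [neg_add]
      exact eq_sub_of_add_eq e
  obtain ⟨hcon, hfin, hcard⟩ := hmain
  have hpal : ∀ l, IsLine l → (pa (β - l) = 1 ↔ inter β l = 1) := fun l h => by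
    have h1 := h.1
    have h2 := h.2
    rw [pa_eq_iff] at hpa ⊢
    rw [inter_neg_left] at h2
    simp only [sub_eq_add_neg, inter_add_left, inter_add_right, inter_neg_left, inter_neg_right,
      inter_comm' l β]
    constructor <;> intro <;> linarith
  have hset : {l : ℤ × (Fin r → ℤ) | IsLine l ∧ pa (β - l) = 1} =
      {l | IsLine l ∧ inter (β + Kcl r) l = 0} := by
    ext l
    refine and_congr_right fun h => ?_
    rw [hpal l h, inter_add_left]
    have h2 := h.2
    rw [inter_neg_left] at h2
    constructor <;> intro <;> linarith
  refine ⟨⟨?_, hcon, ?_, hcon.2⟩, ?_, ?_, ?_⟩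
  · intro β₁ C hsum hC hp
    have hβ₁ : β₁ = (β + Kcl r) + (-(Kcl r) + -C) := by rw [← hsum]; abel
    have hz : (β + Kcl r) + -C = 0 := by
      obtain ⟨c1, c2⟩ := hcon
      obtain ⟨c3, c4⟩ := hC
      rw [pa_eq_iff, hβ₁] at hp
      generalize β + Kcl r = D at *
      rw [inter_neg_left] at c2 c4
      simp only [inter_add_left, inter_add_right, inter_neg_left, inter_neg_right,
        inter_comm' D (Kcl r), inter_comm' C (Kcl r), inter_comm' C D] at hp
      refine eq_zero_of_isotropic hr _ ?_ ?_
      · simp only [inter_add_left, inter_add_right, inter_neg_left, inter_neg_right,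
          inter_comm' C D]
        linarith
      · rw [inter_add_right, inter_neg_right]
        linarith
    have hCD : C = β + Kcl r := (add_neg_eq_zero.1 hz).symm
    refine ⟨?_, hCD⟩
    rw [hβ₁, hCD]
    abel
  · rw [pa_eq_iff]
    simp only [inter_neg_left, inter_neg_right]
    ring
  · rw [hset]; exact hfin
  · rw [hset]; exact hcard
  · intro l h hp
    rw [hpal l h] at hp
    rw [sub_eq_add_neg, inter_add_left, inter_neg_left, hp, h.1]
    norm_num
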